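/- Let θ ∈ (0, 1/2) and q ∈ [0, 1/2). Let P = P_{T,θ} on {0,1}³ for the tree T with edge set {{1,2},{2,3}}, let P^{(q)} be its noisy version, and let y_1,…,y_n be i.i.d. samples from P^{(q)} with empirical agreement weights Â^{(q)}_{i,j}. Define β₁ := ((1−q)³+q³)·θ(1−θ)/2 + q(1−q)·(1−θ(1−θ))/2, β₂ := ((1−q)³+q³)·θ²/2 + q(1−q)·(1−θ²)/2, K^{(q)} := −log(1 − 4·((β₁+β₂)/2 − √(β₁β₂))), μ₂ := 4√(β₁β₂)·e^{K^{(q)}}, z := √(β₂/β₁), f̃^{(q)}(n) := (e^{−n·K^{(q)}}/√(2πμ₂n))·[1 + (1−3μ₂)/(8μ₂n)], and f^{(q)}(n) := (f̃^{(q)}(n)/(1−z))·[1 − z(1+z)/(2(1−z)²μ₂n)]. Then ℙ(Â^{(q)}_{1,3} = Â^{(q)}_{1,2}) = f̃^{(q)}(n)·(1 + o(n^{−1})) and ℙ(Â^{(q)}_{1,3} ≥ Â^{(q)}_{1,2}) = f^{(q)}(n)·(1 + o(n^{−1})); that is, n·( ℙ(Â^{(q)}_{1,3} = Â^{(q)}_{1,2})/f̃^{(q)}(n)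 − 1 ) → 0 and n·( ℙ(Â^{(q)}_{1,3} ≥ Â^{(q)}_{1,2})/f^{(q)}(n) − 1 ) → 0 as n → ∞. -/

import Mathlib

open scoped Classical BigOperators
open Filter

noncomputable section

/-- Symmetric pair weight `w(x i, x j)` lifted to unordered pairs. -/
def pairWeight (θ : ℝ) {p : ℕ} (x : Fin p → Bool) : Sym2 (Fin p) → ℝ :=
  Sym2.lift ⟨fun i j => if x i = x j then 1 - θ else θ, fun i j => by
    dsimp only
    by_cases h : x i = x j
    · rw [if_pos h, if_pos h.symm]
    · rw [if_neg h, if_neg (fun hh => h hh.symm)]⟩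

/-- The homogeneous zero-external-field Ising tree distribution. -/
def isingP (θ : ℝ) {p : ℕ} (T : SimpleGraph (Fin p)) (x : Fin p → Bool) : ℝ :=
  (1 / 2) * ∏ e ∈ T.edgeFinset, pairWeight θ x e

/-- Probability of an event `A` about `n` i.i.d. samples from pmf `P`. -/
def iidProb {p : ℕ} (P : (Fin p → Bool) → ℝ) (n : ℕ)
    (A : Set (Fin n → Fin p → Bool)) : ℝ :=
  ∑ xs : Fin n → Fin p → Bool, if xs ∈ A then ∏ k, P (xs k) else 0

/-- Empirical agreement weight. -/
def Ahat {p n : ℕ} (xs : Fin n → Fin p → Bool) (i j : Fin p) : ℝ :=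
  ((Finset.univ.filter (fun k : Fin n => xs k i = xs k j)).card : ℝ) / n

/-- Empirical agreement weight on unordered pairs. -/
def AhatSym {p n : ℕ} (xs : Fin n → Fin p → Bool) : Sym2 (Fin p) → ℝ :=
  Sym2.lift ⟨fun i j => Ahat xs i j, fun i j => by
    have h : (Finset.univ.filter fun k : Fin n => xs k i = xs k j)
        = (Finset.univ.filter fun k : Fin n => xs k j = xs k i) :=
      Finset.filter_congr (fun k _ => ⟨Eq.symm, Eq.symm⟩)
    simp only [Ahat, h]⟩

/-- The path (Markov chain) tree on 3 nodes with edges {1,2},{2,3}. -/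
def chainA : SimpleGraph (Fin 3) := SimpleGraph.fromEdgeSet {s(0,1), s(1,2)}

def chainB : SimpleGraph (Fin 3) := SimpleGraph.fromEdgeSet {s(0,2), s(1,2)}

def chainC : SimpleGraph (Fin 3) := SimpleGraph.fromEdgeSet {s(0,1), s(0,2)}

def path4 : SimpleGraph (Fin 4) := SimpleGraph.fromEdgeSet {s(0,1), s(1,2), s(2,3)}

def Kexp (θ : ℝ) : ℝ := -Real.log (1 - θ * (1 - Real.sqrt (4 * θ * (1 - θ))))

def sigmaSq (θ : ℝ) : ℝ := θ * Real.sqrt (4 * θ * (1 - θ)) * Real.exp (Kexp θ)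

def zTheta (θ : ℝ) : ℝ := Real.sqrt (θ / (1 - θ))

def ftilde (θ : ℝ) (n : ℕ) : ℝ :=
  Real.exp (-(n : ℝ) * Kexp θ) / Real.sqrt (2 * Real.pi * sigmaSq θ * n)
    * (1 + (1 - 3 * sigmaSq θ) / (8 * sigmaSq θ * n))

def fn (θ : ℝ) (n : ℕ) : ℝ :=
  ftilde θ n / (1 - zTheta θ)
    * (1 - zTheta θ * (1 + zTheta θ) / (2 * (1 - zTheta θ) ^ 2 * sigmaSq θ * n))

/-- Hamming distance. -/
def hamming {p : ℕ} (x y : Fin p → Bool) : ℕ :=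
  (Finset.univ.filter (fun i => x i ≠ y i)).card

/-- Noisy (BSC with crossover probability q) version of a distribution. -/
def noisy (q : ℝ) {p : ℕ} (P : (Fin p → Bool) → ℝ) (y : Fin p → Bool) : ℝ :=
  ∑ x : Fin p → Bool, q ^ hamming x y * (1 - q) ^ (p - hamming x y) * P x

def beta1 (θ q : ℝ) : ℝ :=
  ((1 - q) ^ 3 + q ^ 3) * (θ * (1 - θ) / 2) + q * (1 - q) * ((1 - θ * (1 - θ)) / 2)

def beta2 (θ q : ℝ) : ℝ :=
  ((1 - q) ^ 3 + q ^ 3) * (θ ^ 2 / 2) + q * (1 - q) * ((1 - θ ^ 2) / 2)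

def Kq (θ q : ℝ) : ℝ :=
  -Real.log (1 - 4 * ((beta1 θ q + beta2 θ q) / 2 - Real.sqrt (beta1 θ q * beta2 θ q)))

def mu2 (θ q : ℝ) : ℝ := 4 * Real.sqrt (beta1 θ q * beta2 θ q) * Real.exp (Kq θ q)

def zq (θ q : ℝ) : ℝ := Real.sqrt (beta2 θ q / beta1 θ q)

def ftildeq (θ q : ℝ) (n : ℕ) : ℝ :=
  Real.exp (-(n : ℝ) * Kq θ q) / Real.sqrt (2 * Real.pi * mu2 θ q * n)
    * (1 + (1 - 3 * mu2 θ q) / (8 * mu2 θ q * n))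

def fnq (θ q : ℝ) (n : ℕ) : ℝ :=
  ftildeq θ q n / (1 - zq θ q)
    * (1 - zq θ q * (1 + zq θ q) / (2 * (1 - zq θ q) ^ 2 * mu2 θ q * n))

/-- Marginal of a pmf on `{0,1}^p` on a single coordinate. -/
def marg1 {p : ℕ} (Q : (Fin p → Bool) → ℝ) (i : Fin p) (a : Bool) : ℝ :=
  ∑ x ∈ Finset.univ.filter (fun x : Fin p → Bool => x i = a), Q x

/-- Marginal of a pmf on `{0,1}^p` on a pair of coordinates. -/
def marg2 {p : ℕ} (Q : (Fin p → Bool) → ℝ) (i j : Fin p) (a b : Bool) : ℝ :=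
  ∑ x ∈ Finset.univ.filter (fun x : Fin p → Bool => x i = a ∧ x j = b), Q x

/-- Kullback-Leibler divergence between pmfs on a finite type. -/
def klDiv {X : Type*} [Fintype X] (Q P : X → ℝ) : ℝ :=
  ∑ x : X, Q x * Real.log (Q x / P x)

/-- Empirical mutual information between coordinates `i` and `j`. -/
def mutInf {p : ℕ} (Q : (Fin p → Bool) → ℝ) (i j : Fin p) : ℝ :=
  ∑ a : Bool, ∑ b : Bool,
    marg2 Q i j a b * Real.log (marg2 Q i j a b / (marg1 Q i a * marg1 Q j b))

end


lemma sum_fin3 {M : Type*} [AddCommMonoid M] (f : (Fin 3 → Bool) → M) :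
    ∑ x, f x = ∑ a, ∑ b, ∑ c, f ![a, b, c] := by
  let e' : (Bool × Bool × Bool) ≃ (Fin 3 → Bool) :=
    { invFun := fun x => (x 0, x 1, x 2)
      toFun := fun y => ![y.1, y.2.1, y.2.2]
      right_inv := fun x => by ext i; fin_cases i <;> rfl
      left_inv := fun y => rfl }
  rw [← e'.sum_comp, Fintype.sum_prod_type]
  simp only [Fintype.sum_prod_type]
  rfl

lemma ising_eq (θ : ℝ) (x : Fin 3 → Bool) : isingP θ chainA x =
    1 / 2 * ((if x 0 = x 1 then 1 - θ else θ) * (if x 1 = x 2 then 1 - θ else θ)) := by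
  unfold isingP
  have h : chainA.edgeFinset = {s(0,1), s(1,2)} := by
    ext e
    rw [SimpleGraph.mem_edgeFinset, show chainA.edgeSet = _ from
      SimpleGraph.edgeSet_fromEdgeSet (V := Fin 3) {s(0,1), s(1,2)}]
    simp only [Set.mem_sdiff, Set.mem_insert_iff, Set.mem_singleton_iff, Finset.mem_insert,
      Finset.mem_singleton]
    constructor
    · exact fun h => h.1
    · rintro (h | h) <;> subst h <;> simp
  rw [h, Finset.prod_insert (by decide), Finset.prod_singleton]
  rfl

lemma ham3 (a b c d e f : Bool) : hamming ![a,b,c] ![d,e,f] =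
    (if a = d then 0 else 1) + (if b = e then 0 else 1) + (if c = f then 0 else 1) := by
  unfold hamming
  rw [Finset.card_filter, Fin.sum_univ_three]
  cases a <;> cases b <;> cases c <;> cases d <;> cases e <;> cases f <;> simp

def Wf (x : Fin 3 → Bool) : ℤ :=
  (if x 0 = x 2 then 1 else 0) - (if x 0 = x 1 then 1 else 0)

lemma noisy_sum (θ q : ℝ) (h : ℤ → ℂ) :
    ∑ x, (noisy q (isingP θ chainA) x : ℂ) * h (Wf x) =
      ((1 - 2 * beta1 θ q - 2 * beta2 θ q : ℝ) : ℂ) * h 0 + ((2 * beta1 θ q : ℝ) : ℂ) * h (-1)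
        + ((2 * beta2 θ q : ℝ) : ℂ) * h 1 := by
  rw [sum_fin3]
  simp only [noisy, sum_fin3, ham3, ising_eq, Fintype.sum_bool, Wf, beta1, beta2]
  simp
  ring

lemma prod_aux (P : (Fin 3 → Bool) → ℝ) (z : ℝ) (hz : 0 < z) (t : ℝ) (n : ℕ)
    (xs : Fin n → Fin 3 → Bool) :
    ∏ i, ((P (xs i) : ℂ) * ((z : ℂ) ^ (-(Wf (xs i))) *
      Complex.exp ((Wf (xs i) : ℂ) * t * Complex.I)))
    = (((∏ i, P (xs i)) * z ^ (-∑ i, Wf (xs i)) : ℝ) : ℂ) *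
      Complex.exp (((∑ i, Wf (xs i) : ℤ) : ℂ) * t * Complex.I) := by
  have hz' : (z : ℂ) ≠ 0 := by exact_mod_cast hz.ne'
  have key : ∀ s : Finset (Fin n), ∏ i ∈ s, (z : ℂ) ^ (-(Wf (xs i))) =
      (z : ℂ) ^ (-∑ i ∈ s, Wf (xs i)) := by
    intro s
    induction s using Finset.induction_on with
    | empty => simp
    | insert a s ha ih =>
      rw [Finset.prod_insert ha, Finset.sum_insert ha, ih, neg_add, zpow_add₀ hz']
  rw [Finset.prod_mul_distrib, Finset.prod_mul_distrib, key, ← Complex.exp_sum]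
  push_cast
  rw [Finset.sum_mul, Finset.sum_mul]
  ring

lemma int_cos (m : ℤ) : ∫ t in (-Real.pi)..Real.pi, Real.cos (m * t) =
    if m = 0 then 2 * Real.pi else 0 := by
  split_ifs with h
  · subst h; simp; ring
  · have hm : (m : ℝ) ≠ 0 := by exact_mod_cast h
    rw [intervalIntegral.integral_comp_mul_left _ hm]
    simp [Real.sin_int_mul_pi]


/-- integral representation -/
lemma fourier_rep (P : (Fin 3 → Bool) → ℝ) (z r μ : ℝ) (hz : 0 < z)
    (hP : ∀ t : ℝ, ∑ x, ((P x : ℂ) * ((z : ℂ) ^ (-(Wf x)) *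
      Complex.exp ((Wf x : ℂ) * t * Complex.I))) = ((r * (1 - μ + μ * Real.cos t) : ℝ) : ℂ))
    (n : ℕ) (k : ℤ) :
    iidProb P n {xs | ∑ i, Wf (xs i) = k} * (2 * Real.pi) =
      z ^ k * r ^ n * ∫ t in (-Real.pi)..Real.pi,
        (1 - μ + μ * Real.cos t) ^ n * Real.cos (k * t) := by
  have h1 : ∀ t : ℝ, ∑ xs : Fin n → Fin 3 → Bool,
      ((∏ i, P (xs i)) * z ^ (-∑ i, Wf (xs i))) * Real.cos (((∑ i, Wf (xs i) - k : ℤ) : ℝ) * t)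
      = r ^ n * ((1 - μ + μ * Real.cos t) ^ n * Real.cos (k * t)) := by
    intro t
    have h := congrArg (fun w => w ^ n * Complex.exp (-((k * t : ℝ) : ℂ) * Complex.I)) (hP t)
    simp only [Fintype.sum_pow, prod_aux P z hz t n, Finset.sum_mul] at h
    have h2 := congrArg Complex.re h
    rw [Complex.re_sum] at h2
    have e1 : ∀ xs : Fin n → Fin 3 → Bool,
        ((((∏ i, P (xs i)) * z ^ (-∑ i, Wf (xs i)) : ℝ) : ℂ) *
      Complex.exp (((∑ i, Wf (xs i) : ℤ) : ℂ) * t * Complex.I) *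
        Complex.exp (-((k * t : ℝ) : ℂ) * Complex.I)).re =
       ((∏ i, P (xs i)) * z ^ (-∑ i, Wf (xs i))) *
         Real.cos (((∑ i, Wf (xs i) - k : ℤ) : ℝ) * t) := by
      intro xs
      rw [mul_assoc, ← Complex.exp_add, Complex.re_ofReal_mul]
      congr 1
      rw [← Complex.exp_ofReal_mul_I_re]
      congr 2
      push_cast
      ring
    simp only [e1] at h2
    rw [h2, ← Complex.ofReal_pow, Complex.re_ofReal_mul, ← Complex.ofReal_neg,
      Complex.exp_ofReal_mul_I_re, Real.cos_neg, mul_pow]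
    ring
  have h3 : ∫ t in (-Real.pi)..Real.pi, ∑ xs : Fin n → Fin 3 → Bool,
      ((∏ i, P (xs i)) * z ^ (-∑ i, Wf (xs i))) * Real.cos (((∑ i, Wf (xs i) - k : ℤ) : ℝ) * t)
      = r ^ n * ∫ t in (-Real.pi)..Real.pi,
        (1 - μ + μ * Real.cos t) ^ n * Real.cos (k * t) := by
    simp only [h1]
    rw [intervalIntegral.integral_const_mul]
  rw [intervalIntegral.integral_finsetSum] at h3
  · simp only [intervalIntegral.integral_const_mul, int_cos] at h3
    rw [mul_assoc, ← h3, iidProb, Finset.sum_mul, Finset.mul_sum]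
    refine Finset.sum_congr rfl fun xs _ => ?_
    rw [Set.mem_ofPred_eq]
    by_cases h : ∑ i, Wf (xs i) = k
    · rw [if_pos h, if_pos (by omega), h, zpow_neg]
      have : z ^ k ≠ 0 := (zpow_pos hz k).ne'
      field_simp
    · rw [if_neg h, if_neg (by omega)]; simp
  · intro xs _
    apply Continuous.intervalIntegrable
    fun_prop

lemma sumW {n : ℕ} (xs : Fin n → Fin 3 → Bool) : ∑ i, Wf (xs i) =
    ((Finset.univ.filter (fun k : Fin n => xs k 0 = xs k 2)).card : ℤ) -
    ((Finset.univ.filter (fun k : Fin n => xs k 0 = xs k 1)).card : ℤ) := by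
  simp only [Wf, Finset.sum_sub_distrib]
  simp

lemma set_eq {n : ℕ} (hn : 0 < n) : {ys : Fin n → Fin 3 → Bool | Ahat ys 0 2 = Ahat ys 0 1} =
    {xs | ∑ i, Wf (xs i) = ((0 : ℕ) : ℤ)} := by
  ext xs
  have hn' : (n : ℝ) ≠ 0 := by positivity
  simp only [Set.mem_ofPred_eq, Ahat, sumW]
  rw [div_left_inj' hn', Nat.cast_inj]
  omega

lemma iid_ge {n : ℕ} (hn : 0 < n) (P : (Fin 3 → Bool) → ℝ) :
    iidProb P n {ys | Ahat ys 0 1 ≤ Ahat ys 0 2} =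
    ∑ k ∈ Finset.range (n + 1), iidProb P n {xs | ∑ i, Wf (xs i) = (k : ℤ)} := by
  simp only [iidProb]
  rw [Finset.sum_comm]
  refine Finset.sum_congr rfl fun xs _ => ?_
  have hn' : (0 : ℝ) < n := by positivity
  have h1 : xs ∈ {ys : Fin n → Fin 3 → Bool | Ahat ys 0 1 ≤ Ahat ys 0 2} ↔
      0 ≤ ∑ i, Wf (xs i) := by
    simp only [Set.mem_ofPred_eq, Ahat, sumW]
    rw [div_le_div_iff_of_pos_right hn', Nat.cast_le]
    omega
  have h2 : ∑ i, Wf (xs i) ≤ n := by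
    rw [sumW]
    have := Finset.card_le_univ (Finset.univ.filter (fun k : Fin n => xs k 0 = xs k 2))
    rw [Fintype.card_fin] at this
    omega
  simp only [h1, Set.mem_ofPred_eq]
  by_cases h : 0 ≤ ∑ i, Wf (xs i)
  · obtain ⟨m, hm⟩ := Int.eq_ofNat_of_zero_le h
    rw [if_pos h, Finset.sum_eq_single m]
    · rw [if_pos hm]
    · intro b _ hb
      rw [if_neg (by omega)]
    · intro hm'
      simp at hm'
      omega
  · rw [if_neg h]
    symm
    refine Finset.sum_eq_zero fun k _ => ?_
    rw [if_neg (by omega)]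
lemma phi_bound {μ : ℝ} (h0 : 0 < μ) (h1 : μ < 1) {t : ℝ} (ht : |t| ≤ Real.pi) :
    |1 - μ + μ * Real.cos t| ≤ Real.exp (-(2 * μ * (1 - μ) / Real.pi ^ 2) * t ^ 2) := by
  have hc := Real.cos_le_one_sub_mul_cos_sq ht
  have hc1 := Real.neg_one_le_cos t
  have hc2 := Real.cos_le_one t
  refine abs_le_of_sq_le_sq ?_ (Real.exp_pos _).le
  rw [← Real.exp_nat_mul]
  refine le_trans ?_ (Real.add_one_le_exp _)
  have : (2 : ℝ) / Real.pi ^ 2 * t ^ 2 ≤ 1 - Real.cos t := by linarith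
  have e : ((2 : ℕ) : ℝ) * (-(2 * μ * (1 - μ) / Real.pi ^ 2) * t ^ 2) + 1 =
     1 - 2 * μ * (1 - μ) * (2 / Real.pi ^ 2 * t ^ 2) := by push_cast; ring
  rw [e]
  have h3 : 2 * μ * (1 - μ) * (2 / Real.pi ^ 2 * t ^ 2) ≤ 2 * μ * (1 - μ) * (1 - Real.cos t) := by
    apply mul_le_mul_of_nonneg_left this; nlinarith
  have h4 : 0 ≤ μ ^ 2 * ((1 - Real.cos t) * (1 + Real.cos t)) := by
    apply mul_nonneg (by positivity); apply mul_nonneg <;> linarith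
  nlinarith

lemma cos_bd (t : ℝ) : |Real.cos t - (1 - t ^ 2 / 2)| ≤ 3 * t ^ 4 := by
  by_cases h : |t| ≤ 1
  · refine (Real.cos_bound h).trans ?_
    rw [show |t| ^ 4 = t ^ 4 from (by simp [Even.pow_abs (show Even 4 by decide)])]
    nlinarith [sq_nonneg (t ^ 2)]
  · push Not at h
    have h2 : 1 ≤ t ^ 2 := by rw [← sq_abs]; nlinarith
    have := Real.neg_one_le_cos t
    have := Real.cos_le_one t
    rw [abs_le]; constructor <;> nlinarith

lemma exp_bd {y : ℝ} (hy : 0 ≤ y) : |Real.exp (-y) - (1 - y)| ≤ y ^ 2 := by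
  have h1 := Real.add_one_le_exp (-y)
  by_cases h : y ≤ 1
  · have := Real.abs_exp_sub_one_sub_id_le (x := -y) (by rwa [abs_neg, abs_of_nonneg hy])
    rw [neg_sq] at this
    convert this using 2; ring
  · push Not at h
    have : Real.exp (-y) ≤ 1 := Real.exp_le_one_iff.mpr (by linarith)
    rw [abs_le]; constructor <;> nlinarith

/-- difference of base functions -/
lemma base_diff {μ : ℝ} (h0 : 0 < μ) (h1 : μ < 1) (t : ℝ) :
    |(1 - μ + μ * Real.cos t) - Real.exp (-(μ / 2 * t ^ 2))| ≤ 4 * t ^ 4 := by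
  have h2 := cos_bd t
  have h3 := exp_bd (y := μ / 2 * t ^ 2) (by positivity)
  have e : (1 - μ + μ * Real.cos t) - Real.exp (-(μ / 2 * t ^ 2)) =
    μ * (Real.cos t - (1 - t ^ 2 / 2)) - (Real.exp (-(μ / 2 * t ^ 2)) - (1 - μ / 2 * t ^ 2)) := by
    ring
  rw [e]
  refine (abs_sub _ _).trans ?_
  rw [abs_mul, abs_of_pos h0]
  have h4 : μ * |Real.cos t - (1 - t ^ 2 / 2)| ≤ 1 * (3 * t ^ 4) := by
    apply mul_le_mul h1.le h2 (abs_nonneg _) (by norm_num)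
  have h5 : (μ / 2 * t ^ 2) ^ 2 ≤ t ^ 4 := by
    have : μ ^ 2 ≤ 1 := by nlinarith
    nlinarith [sq_nonneg (t ^ 2)]
  linarith

lemma cos_o4 : Tendsto (fun t : ℝ => (Real.cos t - 1 + t ^ 2 / 2) / t ^ 4)
    (nhdsWithin 0 {0}ᶜ) (nhds (1 / 24)) := by
  have h := Real.taylor_tendsto (f := Real.cos) (x₀ := 0) (n := 4) (s := Set.univ) convex_univ
    (Set.mem_univ _) Real.contDiff_cos.contDiffOn
  rw [nhdsWithin_univ] at h
  have h2 := (h.mono_left (nhdsWithin_le_nhds (s := {0}ᶜ))).add_const (1 / 24)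
  rw [zero_add] at h2
  refine h2.congr' ?_
  filter_upwards [self_mem_nhdsWithin] with t ht
  have ht : t ≠ 0 := ht
  simp only [taylorWithinEval_succ, taylor_within_zero_eval, iteratedDerivWithin_univ,
    iteratedDeriv_succ, iteratedDeriv_zero, Real.deriv_cos', deriv.fun_neg', Real.deriv_sin,
    Real.cos_zero, Real.sin_zero, sub_zero]
  simp [Nat.factorial]
  field_simp
  ring

lemma log_o4 (μ : ℝ) : Tendsto (fun t : ℝ =>
    (Real.log (1 - μ + μ * Real.cos t) + μ / 2 * t ^ 2) / t ^ 4) (nhdsWithin 0 {0}ᶜ)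
     (nhds (μ / 24 - μ ^ 2 / 8)) := by
  have hid : Tendsto (fun t : ℝ => t) (nhdsWithin 0 {0}ᶜ) (nhds 0) := nhdsWithin_le_nhds
  have h1 := cos_o4
  have h2 : Tendsto (fun t : ℝ => (1 - Real.cos t) / t ^ 2) (nhdsWithin 0 {0}ᶜ)
      (nhds (1 / 2)) := by
    have h := ((hid.pow 2).mul h1).const_sub (1 / 2)
    norm_num at h
    norm_num
    refine h.congr' ?_
    filter_upwards [self_mem_nhdsWithin] with t ht
    have ht : t ≠ 0 := ht
    field_simp
    ring
  have h3 : Tendsto (fun t : ℝ => (Real.log (1 - μ * (1 - Real.cos t)) + μ * (1 - Real.cos t)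
      + (μ * (1 - Real.cos t)) ^ 2 / 2) / t ^ 4) (nhdsWithin 0 {0}ᶜ) (nhds 0) := by
    apply squeeze_zero_norm' (a := fun t : ℝ => |μ| ^ 3 * t ^ 2)
    · have hu : Tendsto (fun t : ℝ => |μ * (1 - Real.cos t)|) (nhdsWithin 0 {0}ᶜ) (nhds 0) := by
        have : Continuous (fun t : ℝ => |μ * (1 - Real.cos t)|) := by fun_prop
        have := this.tendsto 0
        simp at this
        rw [← abs_zero, ← mul_zero μ] 
        exact tendsto_nhdsWithin_of_tendsto_nhds (by simpa using this)
      filter_upwards [self_mem_nhdsWithin, hu.eventually_lt_const (show (0 : ℝ) < 1 / 2 by norm_num)]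
        with t ht hu
      have ht : t ≠ 0 := ht
      have hl := Real.abs_log_sub_add_sum_range_le (x := μ * (1 - Real.cos t)) (by linarith) 2
      set u := μ * (1 - Real.cos t) with hudef
      have hu2 : |u| ≤ |μ| * (t ^ 2 / 2) := by
        rw [hudef, abs_mul]
        apply mul_le_mul_of_nonneg_left _ (abs_nonneg _)
        rw [abs_of_nonneg (by linarith [Real.cos_le_one t])]
        linarith [Real.one_sub_sq_div_two_le_cos (x := t)]
      have hl2 : |u| ^ 3 / (1 - |u|) ≤ |μ| ^ 3 * t ^ 6 := by
        rw [div_le_iff₀ (by linarith)]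
        have a1 : |u| ^ 3 ≤ (|μ| * (t ^ 2 / 2)) ^ 3 := by gcongr
        have a2 : 0 ≤ |μ| ^ 3 * t ^ 6 := by positivity
        nlinarith
      rw [Real.norm_eq_abs, abs_div, abs_of_pos (show 0 < t ^ 4 by positivity),
        div_le_iff₀ (by positivity)]
      calc _ = |u + u ^ 2 / (1 + 1) + Real.log (1 - u)| := by congr 1; ring
        _ ≤ |u| ^ 3 / (1 - |u|) := by simpa [Finset.sum_range_succ, -abs_mul, hudef] using hl
        _ ≤ _ := hl2
        _ = _ := by ring
    · simpa using (hid.pow 2).const_mul (|μ| ^ 3)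
  have h := (h3.add (h1.const_mul μ)).sub ((h2.pow 2).const_mul (μ ^ 2 / 2))
  convert h.congr' ?_ using 2
  · ring
  filter_upwards [self_mem_nhdsWithin] with t ht
  have ht : t ≠ 0 := ht
  rw [show 1 - μ + μ * Real.cos t = 1 - μ * (1 - Real.cos t) by ring]
  field_simp
  ring

lemma gint (b : ℝ) (hb : 0 < b) (m : ℕ) :
    MeasureTheory.Integrable (fun x : ℝ => x ^ m * Real.exp (-b * x ^ 2)) := by
  have := integrable_rpow_mul_exp_neg_mul_sq hb (s := m) (by
    have : (0 : ℝ) ≤ m := by positivity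
    linarith)
  simpa using this

lemma gmom (b : ℝ) (hb : 0 < b) (m : ℕ) :
    ∫ x : ℝ, x ^ (m + 2) * Real.exp (-b * x ^ 2) =
      (m + 1) / (2 * b) * ∫ x : ℝ, x ^ m * Real.exp (-b * x ^ 2) := by
  have hd : ∀ x : ℝ, HasDerivAt (fun x : ℝ => x ^ (m + 1) * Real.exp (-b * x ^ 2))
      ((m + 1) * (x ^ m * Real.exp (-b * x ^ 2))
        - 2 * b * (x ^ (m + 2) * Real.exp (-b * x ^ 2))) x := by
    intro x
    have h1 := (hasDerivAt_pow (m + 1) x)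
    have h2 := ((hasDerivAt_pow 2 x).const_mul (-b)).exp
    refine (h1.mul h2).congr_deriv ?_
    push_cast
    ring
  have h := MeasureTheory.integral_eq_zero_of_hasDerivAt_of_integrable hd
    (((gint b hb m).const_mul _).sub ((gint b hb (m + 2)).const_mul _)) (gint b hb (m + 1))
  rw [MeasureTheory.integral_sub ((gint b hb m).const_mul _) ((gint b hb (m + 2)).const_mul _),
    MeasureTheory.integral_const_mul, MeasureTheory.integral_const_mul] at h
  rw [div_mul_eq_mul_div, eq_div_iff (by positivity)]
  linarith

lemma sqrt_div_tendsto (s : ℝ) : Tendsto (fun n : ℕ => s / √(n : ℝ)) atTop (nhds 0) :=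
  Tendsto.const_div_atTop (Real.tendsto_sqrt_atTop.comp tendsto_natCast_atTop_atTop) s

lemma w_tendsto (μ s : ℝ) : Tendsto (fun n : ℕ => (n : ℝ) *
    (n * Real.log (1 - μ + μ * Real.cos (s / √n)) + μ / 2 * s ^ 2)) atTop
    (nhds ((μ / 24 - μ ^ 2 / 8) * s ^ 4)) := by
  by_cases hs : s = 0
  · subst hs; simp
  have ht : Tendsto (fun n : ℕ => s / √(n : ℝ)) atTop (nhdsWithin 0 {0}ᶜ) := by
    apply tendsto_nhdsWithin_of_tendsto_nhds_of_eventually_within _ (sqrt_div_tendsto s)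
    filter_upwards [eventually_gt_atTop 0] with n hn
    have : 0 < √(n : ℝ) := Real.sqrt_pos.mpr (by exact_mod_cast hn)
    exact div_ne_zero hs this.ne'
  refine (((log_o4 μ).comp ht).mul_const (s ^ 4)).congr' ?_
  filter_upwards [eventually_gt_atTop 0] with n hn
  have hn' : (0 : ℝ) < n := by exact_mod_cast hn
  have h2 : √(n : ℝ) ^ 2 = n := Real.sq_sqrt hn'.le
  have h4 : √(n : ℝ) ^ 4 = n ^ 2 := by
    calc √(n : ℝ) ^ 4 = (√(n : ℝ) ^ 2) ^ 2 := by ring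
      _ = _ := by rw [h2]
  simp only [Function.comp, div_pow, h2, h4]
  field_simp

lemma exp_w {w : ℕ → ℝ} {a : ℝ} (h : Tendsto w atTop (nhds a)) :
    Tendsto (fun n : ℕ => (n : ℝ) * (Real.exp (w n / n) - 1)) atTop (nhds a) := by
  have hdiv : Tendsto (fun n : ℕ => w n / n) atTop (nhds 0) :=
    h.div_atTop tendsto_natCast_atTop_atTop
  have h2 : Tendsto (fun n : ℕ => (n : ℝ) * (Real.exp (w n / n) - 1 - w n / n)) atTop (nhds 0) := by
    apply squeeze_zero_norm' (a := fun n : ℕ => w n * (w n / n))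
    · have := hdiv.abs
      rw [abs_zero] at this
      filter_upwards [this.eventually_lt_const one_pos, eventually_gt_atTop 0] with n h1 hn
      have hn' : (0 : ℝ) < n := by exact_mod_cast hn
      rw [Real.norm_eq_abs, abs_mul, abs_of_pos hn']
      have := mul_le_mul_of_nonneg_left (Real.abs_exp_sub_one_sub_id_le h1.le) hn'.le
      refine this.trans (le_of_eq ?_)
      field_simp
    · simpa using h.mul hdiv
  have h3 := h2.add h
  rw [zero_add] at h3
  refine h3.congr' ?_
  filter_upwards [eventually_gt_atTop 0] with n hn
  have hn' : (0 : ℝ) < n := by exact_mod_cast hn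
  field_simp
  ring

lemma pow_tendsto (μ s : ℝ) : Tendsto (fun n : ℕ => (n : ℝ) *
    ((1 - μ + μ * Real.cos (s / √n)) ^ n - Real.exp (-(μ / 2) * s ^ 2))) atTop
    (nhds ((μ / 24 - μ ^ 2 / 8) * (s ^ 4 * Real.exp (-(μ / 2) * s ^ 2)))) := by
  have h := (exp_w (w_tendsto μ s)).mul_const (Real.exp (-(μ / 2) * s ^ 2))
  rw [mul_assoc] at h
  refine h.congr' ?_
  have hpos : Tendsto (fun n : ℕ => 1 - μ + μ * Real.cos (s / √n)) atTop (nhds 1) := by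
    have hc : Continuous (fun t : ℝ => 1 - μ + μ * Real.cos t) := by fun_prop
    have := (hc.tendsto 0).comp (sqrt_div_tendsto s)
    simpa [Function.comp_def] using this
  filter_upwards [hpos.eventually_const_lt (show (0 : ℝ) < 1 by norm_num), eventually_gt_atTop 0]
    with n h1 hn
  have hn' : (0 : ℝ) < n := by exact_mod_cast hn
  rw [mul_div_cancel_left₀ _ hn'.ne', mul_assoc]
  congr 1
  rw [sub_mul, ← Real.exp_add, one_mul]
  congr 1
  rw [← Real.exp_log h1, ← Real.exp_nat_mul, Real.exp_log h1]
  congr 1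
  ring

/-- rescaled cutoff -/
noncomputable def Sc (n : ℕ) : Set ℝ := Set.Ioc (-(Real.pi * √n)) (Real.pi * √n)

lemma scale (G : ℝ → ℝ) {n : ℕ} (hn : 0 < n) :
    √n * ∫ t in (-Real.pi)..Real.pi, G t = ∫ s, (Sc n).indicator (fun s => G (s / √n)) s := by
  have h : 0 < √(n : ℝ) := Real.sqrt_pos.mpr (by exact_mod_cast hn)
  rw [Sc, MeasureTheory.integral_indicator measurableSet_Ioc,
    ← intervalIntegral.integral_of_le (by nlinarith [Real.pi_pos, mul_pos Real.pi_pos h]),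
    intervalIntegral.integral_comp_div _ h.ne', smul_eq_mul]
  congr 2
  · field_simp
  · field_simp

lemma mem_Sc {n : ℕ} (hn : 0 < n) {s : ℝ} (hs : s ∈ Sc n) : |s / √n| ≤ Real.pi := by
  have h : 0 < √(n : ℝ) := Real.sqrt_pos.mpr (by exact_mod_cast hn)
  rw [abs_div, abs_of_pos h, div_le_iff₀ h, abs_le]
  exact ⟨hs.1.le, hs.2⟩

lemma not_mem_Sc {n : ℕ} (hn : 0 < n) {s : ℝ} (hs : s ∉ Sc n) : (n : ℝ) ≤ s ^ 2 := by
  have h : 0 < √(n : ℝ) := Real.sqrt_pos.mpr (by exact_mod_cast hn)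
  have h2 : √(n : ℝ) ^ 2 = n := Real.sq_sqrt (by positivity)
  have hp := Real.pi_gt_three
  have h3 : √(n : ℝ) ≤ |s| := by
    by_contra hc
    push Not at hc
    apply hs
    have := abs_lt.mp hc
    constructor <;> nlinarith
  rw [← h2, ← sq_abs s]
  gcongr

lemma ev_mem_Sc (s : ℝ) : ∀ᶠ n : ℕ in atTop, s ∈ Sc n := by
  filter_upwards [eventually_gt_atTop 0, eventually_gt_atTop ⌈s ^ 2⌉₊] with n hn h2
  by_contra hc
  have := not_mem_Sc hn hc
  have h3 : s ^ 2 < n := (Nat.lt_of_ceil_lt h2)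
  linarith

lemma scale_t {n : ℕ} (hn : 0 < n) (s : ℝ) : (s / √(n : ℝ)) ^ 2 = s ^ 2 / n := by
  rw [div_pow, Real.sq_sqrt (by positivity)]

lemma dom1 {μ : ℝ} (h0 : 0 < μ) (h1 : μ < 1) {n : ℕ} (hn : 2 ≤ n) (s : ℝ) :
    |(n : ℝ) * ((Sc n).indicator (fun s => (1 - μ + μ * Real.cos (s / √n)) ^ n) s
      - Real.exp (-(μ / 2) * s ^ 2))| ≤
    4 * (s ^ 4 * Real.exp (-(μ * (1 - μ) / Real.pi ^ 2) * s ^ 2)) +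
      s ^ 2 * Real.exp (-(μ * (1 - μ) / Real.pi ^ 2) * s ^ 2) := by
  have hn0 : 0 < n := by omega
  have hn' : (0 : ℝ) < n := by exact_mod_cast hn0
  have hn2 : (2 : ℝ) ≤ n := by exact_mod_cast hn
  have hp := Real.pi_gt_three
  have hc0 : 0 ≤ μ * (1 - μ) / Real.pi ^ 2 := by
    apply div_nonneg _ (by positivity); nlinarith
  have hc1 : μ * (1 - μ) / Real.pi ^ 2 ≤ μ / 4 := by
    rw [div_le_iff₀ (by positivity)]; 
    have : 4 ≤ Real.pi ^ 2 := by nlinarith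
    nlinarith [mul_pos h0 h0, mul_le_mul_of_nonneg_left this h0.le]
  set c := μ * (1 - μ) / Real.pi ^ 2 with hc
  by_cases hs : s ∈ Sc n
  · rw [Set.indicator_of_mem hs]
    set t := s / √(n : ℝ) with ht
    have ht2 : t ^ 2 = s ^ 2 / n := scale_t hn0 s
    have hb : Real.exp (-(μ / 2) * s ^ 2) = Real.exp (-(μ / 2 * t ^ 2)) ^ n := by
      rw [← Real.exp_nat_mul, ht2]; congr 1; field_simp
    rw [hb, abs_mul, abs_of_pos hn']
    have e1 := abs_pow_sub_pow_le (1 - μ + μ * Real.cos t) (Real.exp (-(μ / 2 * t ^ 2))) n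
    have e2 := base_diff h0 h1 t
    have e3 : max |1 - μ + μ * Real.cos t| |Real.exp (-(μ / 2 * t ^ 2))| ≤
        Real.exp (-(2 * c) * t ^ 2) := by
      apply max_le
      · have := phi_bound h0 h1 (mem_Sc hn0 hs)
        rwa [show 2 * μ * (1 - μ) / Real.pi ^ 2 = 2 * c by rw [hc]; ring] at this
      · rw [abs_of_pos (Real.exp_pos _)]
        apply Real.exp_le_exp.mpr
        nlinarith [sq_nonneg t]
    have e4 : max |1 - μ + μ * Real.cos t| |Real.exp (-(μ / 2 * t ^ 2))| ^ (n - 1) ≤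
        Real.exp (-c * s ^ 2) := by
      calc _ ≤ Real.exp (-(2 * c) * t ^ 2) ^ (n - 1) := by gcongr
        _ = Real.exp (((n - 1 : ℕ) : ℝ) * (-(2 * c) * t ^ 2)) := by rw [← Real.exp_nat_mul]
        _ ≤ _ := by
          apply Real.exp_le_exp.mpr
          rw [Nat.cast_sub hn0, ht2]
          have : s ^ 2 ≤ 2 * ((n - 1) * (s ^ 2 / n)) := by
            rw [← mul_assoc, mul_div_assoc', le_div_iff₀ hn']
            nlinarith [sq_nonneg s]
          have := mul_le_mul_of_nonneg_left this hc0
          push_cast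
          nlinarith
    have t4 : t ^ 4 = s ^ 4 / n ^ 2 := by
      rw [show t ^ 4 = (t ^ 2) ^ 2 by ring, ht2]; ring
    calc _ ≤ (n : ℝ) * (4 * t ^ 4 * n * Real.exp (-c * s ^ 2)) := by
          refine mul_le_mul_of_nonneg_left (e1.trans ?_) hn'.le
          gcongr
      _ = 4 * (s ^ 4 * Real.exp (-c * s ^ 2)) := by
          rw [t4]; field_simp
      _ ≤ _ := by
          have : 0 ≤ s ^ 2 * Real.exp (-c * s ^ 2) := by positivity
          linarith
  · rw [Set.indicator_of_notMem hs, zero_sub, mul_neg, abs_neg, abs_of_nonneg (by positivity)]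
    have h2 := not_mem_Sc hn0 hs
    have h3 : Real.exp (-(μ / 2) * s ^ 2) ≤ Real.exp (-c * s ^ 2) := by
      apply Real.exp_le_exp.mpr
      nlinarith [sq_nonneg s]
    have h4 : 0 ≤ 4 * (s ^ 4 * Real.exp (-c * s ^ 2)) := by positivity
    have : (n : ℝ) * Real.exp (-(μ / 2) * s ^ 2) ≤ s ^ 2 * Real.exp (-c * s ^ 2) := by gcongr
    linarith

lemma dom2 {μ : ℝ} (h0 : 0 < μ) (h1 : μ < 1) {n : ℕ} (hn : 0 < n) (k s : ℝ) :
    |(Sc n).indicator (fun s => (n : ℝ) * ((1 - μ + μ * Real.cos (s / √n)) ^ n *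
      (Real.cos (k * (s / √n)) - 1))) s| ≤
    k ^ 2 * (s ^ 2 * Real.exp (-(μ * (1 - μ) / Real.pi ^ 2) * s ^ 2)) := by
  have hn' : (0 : ℝ) < n := by exact_mod_cast hn
  have hc0 : 0 ≤ μ * (1 - μ) / Real.pi ^ 2 := by
    apply div_nonneg _ (by positivity); nlinarith
  set c := μ * (1 - μ) / Real.pi ^ 2 with hc
  by_cases hs : s ∈ Sc n
  · rw [Set.indicator_of_mem hs]
    have e1 := phi_bound h0 h1 (mem_Sc hn hs)
    rw [show 2 * μ * (1 - μ) / Real.pi ^ 2 = 2 * c by rw [hc]; ring] at e1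
    set t := s / √(n : ℝ) with ht
    have ht2 : t ^ 2 = s ^ 2 / n := scale_t hn s
    have e2 : |Real.cos (k * t) - 1| ≤ k ^ 2 * t ^ 2 := by
      have := Real.one_sub_sq_div_two_le_cos (x := k * t)
      have h3 := Real.cos_le_one (k * t)
      rw [abs_le]; constructor <;> nlinarith [sq_nonneg (k * t)]
    have e3 : |1 - μ + μ * Real.cos t| ^ n ≤ Real.exp (-c * s ^ 2) := by
      calc _ ≤ Real.exp (-(2 * c) * t ^ 2) ^ n := by gcongr
        _ = Real.exp (n * (-(2 * c) * t ^ 2)) := by rw [← Real.exp_nat_mul]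
        _ ≤ _ := by
          apply Real.exp_le_exp.mpr
          rw [ht2]
          have : (n : ℝ) * (-(2 * c) * (s ^ 2 / n)) = -(2 * c) * s ^ 2 := by field_simp
          rw [this]
          nlinarith [mul_nonneg hc0 (sq_nonneg s)]
    rw [abs_mul, abs_mul, abs_pow, abs_of_pos hn']
    calc _ ≤ (n : ℝ) * (Real.exp (-c * s ^ 2) * (k ^ 2 * t ^ 2)) := by gcongr
      _ = _ := by rw [ht2]; field_simp
  · rw [Set.indicator_of_notMem hs, abs_zero]
    positivity

lemma meas_ind (G : ℝ → ℝ) (hG : Continuous G) (n : ℕ) :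
    MeasureTheory.AEStronglyMeasurable ((Sc n).indicator G) := by
  unfold Sc
  exact hG.aestronglyMeasurable.indicator measurableSet_Ioc

lemma c_pos {μ : ℝ} (h0 : 0 < μ) (h1 : μ < 1) : 0 < μ * (1 - μ) / Real.pi ^ 2 := by
  have := Real.pi_pos
  apply div_pos _ (by positivity); nlinarith

/-- main integral -/
noncomputable def Aint (μ : ℝ) (n k : ℕ) : ℝ :=
  ∫ t in (-Real.pi)..Real.pi, (1 - μ + μ * Real.cos t) ^ n * Real.cos (k * t)

lemma L1 {μ : ℝ} (h0 : 0 < μ) (h1 : μ < 1) :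
    Tendsto (fun n : ℕ => (n : ℝ) * (√n * Aint μ n 0 - √(2 * Real.pi / μ))) atTop
      (nhds (√(2 * Real.pi / μ) * ((1 - 3 * μ) / (8 * μ)))) := by
  have hmu : 0 < μ / 2 := by positivity
  have M0 : ∫ x : ℝ, Real.exp (-(μ / 2) * x ^ 2) = √(2 * Real.pi / μ) := by
    rw [integral_gaussian]; congr 1; field_simp
  have M4 : ∫ x : ℝ, x ^ 4 * Real.exp (-(μ / 2) * x ^ 2) = 3 / μ ^ 2 * √(2 * Real.pi / μ) := by
    have e2 := gmom (μ / 2) hmu 2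
    have e0 := gmom (μ / 2) hmu 0
    simp only [pow_zero, one_mul, zero_add] at e0 e2
    rw [M0] at e0
    rw [e2, e0]
    push_cast
    field_simp
    ring
  have hi := gint _ (c_pos h0 h1)
  have H := MeasureTheory.tendsto_integral_filter_of_dominated_convergence
    (μ := MeasureTheory.volume) (l := atTop)
    (F := fun (n : ℕ) (s : ℝ) => (n : ℝ) *
      ((Sc n).indicator (fun s => (1 - μ + μ * Real.cos (s / √n)) ^ n) s
      - Real.exp (-(μ / 2) * s ^ 2)))
    (f := fun s => (μ / 24 - μ ^ 2 / 8) * (s ^ 4 * Real.exp (-(μ / 2) * s ^ 2)))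
    (fun s => 4 * (s ^ 4 * Real.exp (-(μ * (1 - μ) / Real.pi ^ 2) * s ^ 2)) +
      s ^ 2 * Real.exp (-(μ * (1 - μ) / Real.pi ^ 2) * s ^ 2))
    (by
      refine Eventually.of_forall fun n => ?_
      apply MeasureTheory.AEStronglyMeasurable.const_mul
      apply (meas_ind _ (by fun_prop) n).sub
      exact Continuous.aestronglyMeasurable (by fun_prop))
    (by
      filter_upwards [eventually_ge_atTop 2] with n hn
      exact Eventually.of_forall fun s => dom1 h0 h1 hn s)
    (((hi 4).const_mul 4).add (hi 2))
    (by
      refine Eventually.of_forall fun s => ?_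
      refine (pow_tendsto μ s).congr' ?_
      filter_upwards [ev_mem_Sc s] with n hn
      rw [Set.indicator_of_mem hn])
  rw [MeasureTheory.integral_const_mul, M4] at H
  convert H.congr' ?_ using 2
  · field_simp
    ring
  · filter_upwards [eventually_gt_atTop 0] with n hn
    rw [MeasureTheory.integral_const_mul, MeasureTheory.integral_sub, M0, ← scale
      (fun t => (1 - μ + μ * Real.cos t) ^ n) hn]
    · simp [Aint]
    · unfold Sc
      rw [MeasureTheory.integrable_indicator_iff measurableSet_Ioc]
      exact (Continuous.integrableOn_Icc (by fun_prop)).mono_set Set.Ioc_subset_Icc_self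
    · simpa using gint (μ / 2) hmu 0

lemma diff_eq (μ : ℝ) {n : ℕ} (hn : 0 < n) (k : ℕ) :
    (n : ℝ) * (√n * (Aint μ n k - Aint μ n 0)) =
    ∫ s, (Sc n).indicator (fun s => (n : ℝ) * ((1 - μ + μ * Real.cos (s / √n)) ^ n *
      (Real.cos (k * (s / √n)) - 1))) s := by
  rw [← scale (fun t => (n : ℝ) * ((1 - μ + μ * Real.cos t) ^ n * (Real.cos (k * t) - 1))) hn,
    intervalIntegral.integral_const_mul]
  have : Aint μ n k - Aint μ n 0 = ∫ t in (-Real.pi)..Real.pi,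
      (1 - μ + μ * Real.cos t) ^ n * (Real.cos (k * t) - 1) := by
    unfold Aint
    rw [← intervalIntegral.integral_sub]
    · simp [mul_sub]
    · exact Continuous.intervalIntegrable (by fun_prop) _ _
    · exact Continuous.intervalIntegrable (by fun_prop) _ _
  rw [this]
  ring

lemma L3 {μ : ℝ} (h0 : 0 < μ) (h1 : μ < 1) : ∃ C : ℝ, ∀ n : ℕ, 0 < n → ∀ k : ℕ,
    |(n : ℝ) * (√n * (Aint μ n k - Aint μ n 0))| ≤ C * k ^ 2 := by
  refine ⟨∫ s : ℝ, s ^ 2 * Real.exp (-(μ * (1 - μ) / Real.pi ^ 2) * s ^ 2), fun n hn k => ?_⟩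
  rw [diff_eq μ hn, mul_comm, ← MeasureTheory.integral_const_mul, ← Real.norm_eq_abs]
  exact MeasureTheory.norm_integral_le_of_norm_le ((gint _ (c_pos h0 h1) 2).const_mul _)
    (Eventually.of_forall fun s => dom2 h0 h1 hn k s)

lemma cos_lim (x : ℝ) : Tendsto (fun n : ℕ => (n : ℝ) * (Real.cos (x / √n) - 1)) atTop
    (nhds (-(x ^ 2 / 2))) := by
  rw [← tendsto_sub_nhds_zero_iff]
  apply squeeze_zero_norm' (a := fun n : ℕ => 3 * x ^ 4 / n)
  · filter_upwards [eventually_gt_atTop 0] with n hn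
    have hn' : (0 : ℝ) < n := by exact_mod_cast hn
    have h := cos_bd (x / √n)
    have e2 := scale_t hn x
    rw [show (x / √(n : ℝ)) ^ 4 = ((x / √n) ^ 2) ^ 2 by ring, e2] at h
    rw [Real.norm_eq_abs]
    have e : (n : ℝ) * (Real.cos (x / √n) - 1) - -(x ^ 2 / 2) =
      n * (Real.cos (x / √n) - (1 - x ^ 2 / n / 2)) := by field_simp; ring
    rw [e, abs_mul, abs_of_pos hn']
    refine (mul_le_mul_of_nonneg_left h hn'.le).trans (le_of_eq ?_)
    field_simp
  · exact Tendsto.const_div_atTop tendsto_natCast_atTop_atTop _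

lemma L2 {μ : ℝ} (h0 : 0 < μ) (h1 : μ < 1) (k : ℕ) :
    Tendsto (fun n : ℕ => (n : ℝ) * (√n * (Aint μ n k - Aint μ n 0))) atTop
      (nhds (√(2 * Real.pi / μ) * (-(k ^ 2 / (2 * μ))))) := by
  have hmu : 0 < μ / 2 := by positivity
  have M0 : ∫ x : ℝ, Real.exp (-(μ / 2) * x ^ 2) = √(2 * Real.pi / μ) := by
    rw [integral_gaussian]; congr 1; field_simp
  have M2 : ∫ x : ℝ, x ^ 2 * Real.exp (-(μ / 2) * x ^ 2) = 1 / μ * √(2 * Real.pi / μ) := by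
    have e0 := gmom (μ / 2) hmu 0
    simp only [pow_zero, one_mul, zero_add] at e0
    rw [M0] at e0
    rw [e0]
    push_cast
    field_simp
    ring
  have hi := gint _ (c_pos h0 h1)
  have H := MeasureTheory.tendsto_integral_filter_of_dominated_convergence
    (μ := MeasureTheory.volume) (l := atTop)
    (F := fun (n : ℕ) (s : ℝ) => (Sc n).indicator (fun s => (n : ℝ) *
      ((1 - μ + μ * Real.cos (s / √n)) ^ n * (Real.cos (k * (s / √n)) - 1))) s)
    (f := fun s => (-(k ^ 2 / 2)) * (s ^ 2 * Real.exp (-(μ / 2) * s ^ 2)))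
    (fun s => k ^ 2 * (s ^ 2 * Real.exp (-(μ * (1 - μ) / Real.pi ^ 2) * s ^ 2)))
    (Eventually.of_forall fun n => meas_ind _ (by fun_prop) n)
    (by
      filter_upwards [eventually_gt_atTop 0] with n hn
      exact Eventually.of_forall fun s => dom2 h0 h1 hn k s)
    ((hi 2).const_mul _)
    (by
      refine Eventually.of_forall fun s => ?_
      have hp : Tendsto (fun n : ℕ => (1 - μ + μ * Real.cos (s / √n)) ^ n) atTop
          (nhds (Real.exp (-(μ / 2) * s ^ 2))) := by
        rw [← tendsto_sub_nhds_zero_iff]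
        refine ((pow_tendsto μ s).div_atTop tendsto_natCast_atTop_atTop).congr' ?_
        filter_upwards [eventually_gt_atTop 0] with n hn
        have hn' : (0 : ℝ) < n := by exact_mod_cast hn
        field_simp
      have := (cos_lim (k * s)).mul hp
      rw [show -((k * s) ^ 2 / 2) * Real.exp (-(μ / 2) * s ^ 2) =
        (-((k : ℝ) ^ 2 / 2)) * (s ^ 2 * Real.exp (-(μ / 2) * s ^ 2)) by ring] at this
      refine this.congr' ?_
      filter_upwards [ev_mem_Sc s] with n hn
      rw [Set.indicator_of_mem hn, mul_div_assoc]
      ring)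
  rw [MeasureTheory.integral_const_mul, M2] at H
  convert H.congr' ?_ using 2
  · field_simp
  · filter_upwards [eventually_gt_atTop 0] with n hn
    rw [diff_eq μ hn]

lemma sum_sq_geom {z : ℝ} (hz0 : 0 ≤ z) (hz1 : z < 1) :
    HasSum (fun k : ℕ => z ^ k * (k : ℝ) ^ 2) (z * (1 + z) / (1 - z) ^ 3) := by
  have hn : ‖z‖ < 1 := by rwa [Real.norm_eq_abs, abs_of_nonneg hz0]
  have h2 := hasSum_choose_mul_geometric_of_norm_lt_one 2 hn
  have h1 := hasSum_choose_mul_geometric_of_norm_lt_one 1 hn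
  have h0 := hasSum_geometric_of_lt_one hz0 hz1
  have h := ((h2.mul_left 2).sub (h1.mul_left 3)).add h0
  have hz : 1 - z ≠ 0 := by linarith
  have e1 : (fun k : ℕ => z ^ k * (k : ℝ) ^ 2) = fun b : ℕ =>
      2 * (((b + 2).choose 2 : ℕ) * z ^ b) - 3 * (((b + 1).choose 1 : ℕ) * z ^ b) + z ^ b := by
    funext k
    rw [Nat.cast_choose_two, Nat.choose_one_right]
    push_cast
    ring
  have e2 : z * (1 + z) / (1 - z) ^ 3 =
      2 * (1 / (1 - z) ^ (2 + 1)) - 3 * (1 / (1 - z) ^ (1 + 1)) + (1 - z)⁻¹ := by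
    field_simp
    ring
  rw [e1, e2]
  exact h

/-- normalised coefficients -/
noncomputable def Bn (μ : ℝ) (n k : ℕ) : ℝ := √n * Aint μ n k / √(2 * Real.pi / μ)

lemma B1 {μ : ℝ} (h0 : 0 < μ) (h1 : μ < 1) :
    Tendsto (fun n : ℕ => (n : ℝ) * (Bn μ n 0 - 1)) atTop (nhds ((1 - 3 * μ) / (8 * μ))) := by
  have hM : 0 < √(2 * Real.pi / μ) := Real.sqrt_pos.mpr (by have := Real.pi_pos; positivity)
  have h := (L1 h0 h1).div_const (√(2 * Real.pi / μ))
  rw [mul_div_cancel_left₀ _ hM.ne'] at h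
  refine h.congr fun n => ?_
  unfold Bn
  generalize √(2 * Real.pi / μ) = M at *
  field_simp

lemma B2 {μ z : ℝ} (h0 : 0 < μ) (h1 : μ < 1) (hz0 : 0 ≤ z) (hz1 : z < 1) :
    Tendsto (fun n : ℕ => ∑ k ∈ Finset.range (n + 1), z ^ k * (n * (Bn μ n k - Bn μ n 0))) atTop
      (nhds (-(z * (1 + z) / (1 - z) ^ 3 / (2 * μ)))) := by
  have hM : 0 < √(2 * Real.pi / μ) := Real.sqrt_pos.mpr (by have := Real.pi_pos; positivity)
  obtain ⟨C, hC⟩ := L3 h0 h1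
  have hs := sum_sq_geom hz0 hz1
  have e : ∀ n k : ℕ, (n : ℝ) * (Bn μ n k - Bn μ n 0) =
      (n : ℝ) * (√n * (Aint μ n k - Aint μ n 0)) / √(2 * Real.pi / μ) := by
    intro n k; unfold Bn; ring
  have H := tendsto_tsum_of_dominated_convergence (𝓕 := atTop)
    (f := fun n k : ℕ => if k ∈ Finset.range (n + 1) then
      z ^ k * (n * (Bn μ n k - Bn μ n 0)) else 0)
    (g := fun k => -(1 / (2 * μ)) * (z ^ k * (k : ℝ) ^ 2))
    (bound := fun k => |C| / √(2 * Real.pi / μ) * (z ^ k * (k : ℝ) ^ 2))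
    (hs.summable.mul_left _)
    (by
      intro k
      have h := ((L2 h0 h1 k).div_const (√(2 * Real.pi / μ))).const_mul (z ^ k)
      rw [mul_div_cancel_left₀ _ hM.ne'] at h
      rw [show z ^ k * -((k : ℝ) ^ 2 / (2 * μ)) = -(1 / (2 * μ)) * (z ^ k * (k : ℝ) ^ 2) by
        ring] at h
      refine h.congr' ?_
      filter_upwards [eventually_ge_atTop k] with n hn
      rw [if_pos (by simp; omega), e])
    (by
      filter_upwards [eventually_gt_atTop 0] with n hn k
      split_ifs
      · rw [e, Real.norm_eq_abs, abs_mul, abs_div, abs_of_pos hM, abs_of_nonneg (pow_nonneg hz0 k)]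
        have h3 := hC n hn k
        have h4 : C * (k : ℝ) ^ 2 ≤ |C| * (k : ℝ) ^ 2 := by gcongr; exact le_abs_self C
        calc _ ≤ z ^ k * (|C| * (k : ℝ) ^ 2 / √(2 * Real.pi / μ)) := by
              gcongr; linarith
          _ = _ := by ring
      · rw [norm_zero]; positivity)
  rw [tsum_mul_left, hs.tsum_eq] at H
  convert H using 2 with n
  · rw [tsum_eq_sum (s := Finset.range (n + 1))]
    · refine Finset.sum_congr rfl fun k hk => ?_
      rw [if_pos hk]
    · intro k hk; rw [if_neg hk]
  · ring

lemma B3 {μ z : ℝ} (h0 : 0 < μ) (h1 : μ < 1) (hz0 : 0 ≤ z) (hz1 : z < 1) :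
    Tendsto (fun n : ℕ => (n : ℝ) * ((1 - z) * ∑ k ∈ Finset.range (n + 1), z ^ k * Bn μ n k - 1))
      atTop (nhds ((1 - 3 * μ) / (8 * μ) - z * (1 + z) / (2 * (1 - z) ^ 2 * μ))) := by
  have hB := B1 h0 h1
  have hB' : Tendsto (fun n : ℕ => Bn μ n 0) atTop (nhds 1) := by
    rw [← tendsto_sub_nhds_zero_iff]
    refine (hB.div_atTop tendsto_natCast_atTop_atTop).congr' ?_
    filter_upwards [eventually_gt_atTop 0] with n hn
    have hn' : (0 : ℝ) < n := by exact_mod_cast hn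
    field_simp
  have hg : Tendsto (fun n : ℕ => (n : ℝ) * z ^ n) atTop (nhds 0) :=
    tendsto_self_mul_const_pow_of_lt_one hz0 hz1
  have h := (hB.sub ((hB'.mul hg).mul_const z)).add ((B2 h0 h1 hz0 hz1).const_mul (1 - z))
  have hz : 1 - z ≠ 0 := by linarith
  convert h using 2 with n
  · have e : ∑ k ∈ Finset.range (n + 1), z ^ k * (n * (Bn μ n k - Bn μ n 0)) =
        n * ∑ k ∈ Finset.range (n + 1), z ^ k * Bn μ n k
          - n * Bn μ n 0 * ∑ k ∈ Finset.range (n + 1), z ^ k := by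
      rw [Finset.mul_sum, Finset.mul_sum, ← Finset.sum_sub_distrib]
      refine Finset.sum_congr rfl fun k _ => ?_
      ring
    have e2 := mul_neg_geom_sum z (n + 1)
    rw [e]
    linear_combination (n * Bn μ n 0) * e2
  · field_simp
    ring

lemma ratio_lim {B D : ℕ → ℝ} {c : ℝ} (hB : Tendsto (fun n : ℕ => (n : ℝ) * (B n - 1)) atTop (nhds c))
    (hD : Tendsto (fun n : ℕ => (n : ℝ) * (D n - 1)) atTop (nhds c)) :
    Tendsto (fun n : ℕ => (n : ℝ) * (B n / D n - 1)) atTop (nhds 0) := by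
  have hD' : Tendsto D atTop (nhds 1) := by
    rw [← tendsto_sub_nhds_zero_iff]
    refine (hD.div_atTop tendsto_natCast_atTop_atTop).congr' ?_
    filter_upwards [eventually_gt_atTop 0] with n hn
    have hn' : (0 : ℝ) < n := by exact_mod_cast hn
    field_simp
  have h := (hB.sub hD).div hD' one_ne_zero
  rw [sub_self, zero_div] at h
  refine h.congr' ?_
  filter_upwards [hD'.eventually_ne one_ne_zero] with n hn
  simp only [Pi.div_apply]
  field_simp
  ring

lemma facts (θ q : ℝ) (hθ0 : 0 < θ) (hθ1 : θ < 1 / 2) (hq0 : 0 ≤ q) (hq1 : q < 1 / 2) :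
    0 < beta1 θ q ∧ 0 < beta2 θ q ∧ beta2 θ q < beta1 θ q ∧
      0 < 1 - 2 * beta1 θ q - 2 * beta2 θ q := by
  have hx : 0 ≤ q * (1 - q) := mul_nonneg hq0 (by linarith)
  have ha : 0 < (1 - q) ^ 3 + q ^ 3 := by
    have : 0 < 1 - q := by linarith
    positivity
  have h2 : 0 < beta2 θ q := by
    unfold beta2
    have : 0 ≤ q * (1 - q) * ((1 - θ ^ 2) / 2) := mul_nonneg hx (by nlinarith)
    have : 0 < ((1 - q) ^ 3 + q ^ 3) * (θ ^ 2 / 2) := by positivity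
    linarith
  have h12 : beta2 θ q < beta1 θ q := by
    have : beta1 θ q - beta2 θ q = θ * (1 - 2 * θ) / 2 * (1 - 2 * q) ^ 2 := by
      unfold beta1 beta2; ring
    have h3 : 0 < θ * (1 - 2 * θ) / 2 * (1 - 2 * q) ^ 2 := by
      have : 0 < 1 - 2 * θ := by linarith
      have : 0 < 1 - 2 * q := by linarith
      positivity
    linarith
  refine ⟨h2.trans h12, h2, h12, ?_⟩
  have : 1 - 2 * beta1 θ q - 2 * beta2 θ q = 1 / 2 + (1 / 2 - θ) * (1 - 2 * q) ^ 2 := by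
    unfold beta1 beta2; ring
  rw [this]
  have : 0 ≤ (1 / 2 - θ) * (1 - 2 * q) ^ 2 := mul_nonneg (by linarith) (sq_nonneg _)
  linarith

lemma hPlem (θ q : ℝ) (hθ0 : 0 < θ) (hθ1 : θ < 1 / 2) (hq0 : 0 ≤ q) (hq1 : q < 1 / 2) :
    0 < zq θ q ∧ zq θ q < 1 ∧ 0 < mu2 θ q ∧ mu2 θ q < 1 ∧
    ∀ t : ℝ, ∑ x, ((noisy q (isingP θ chainA) x : ℂ) * ((zq θ q : ℂ) ^ (-(Wf x)) *
      Complex.exp ((Wf x : ℂ) * t * Complex.I))) =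
        ((Real.exp (-Kq θ q) * (1 - mu2 θ q + mu2 θ q * Real.cos t) : ℝ) : ℂ) := by
  obtain ⟨b1, b2, b12, hp0⟩ := facts θ q hθ0 hθ1 hq0 hq1
  have hz0 : 0 < zq θ q := Real.sqrt_pos.mpr (by positivity)
  have hz1 : zq θ q < 1 := by
    unfold zq
    rw [Real.sqrt_lt' one_pos, one_pow, div_lt_one b1]
    exact b12
  have hs : 0 < √(beta1 θ q * beta2 θ q) := Real.sqrt_pos.mpr (by positivity)
  have hr : Real.exp (-Kq θ q) = 1 - 2 * beta1 θ q - 2 * beta2 θ q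
      + 4 * √(beta1 θ q * beta2 θ q) := by
    unfold Kq
    rw [neg_neg, Real.exp_log]
    · ring
    · linarith
  have hmu : Real.exp (-Kq θ q) * mu2 θ q = 4 * √(beta1 θ q * beta2 θ q) := by
    unfold mu2
    rw [Real.exp_neg]
    have := (Real.exp_pos (Kq θ q)).ne'
    field_simp
  have hm0 : 0 < mu2 θ q := by unfold mu2; positivity
  have hr0 := Real.exp_pos (-Kq θ q)
  have hm1 : mu2 θ q < 1 := by
    by_contra hc
    push Not at hc
    nlinarith
  refine ⟨hz0, hz1, hm0, hm1, fun t => ?_⟩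
  have e1 : beta1 θ q * zq θ q = √(beta1 θ q * beta2 θ q) := by
    unfold zq
    rw [show beta1 θ q * beta2 θ q = beta1 θ q ^ 2 * (beta2 θ q / beta1 θ q) by field_simp,
      Real.sqrt_mul (by positivity), Real.sqrt_sq b1.le]
  have e2 : beta2 θ q * (zq θ q)⁻¹ = √(beta1 θ q * beta2 θ q) := by
    unfold zq
    rw [← Real.sqrt_inv, inv_div,
      show beta1 θ q * beta2 θ q = beta2 θ q ^ 2 * (beta1 θ q / beta2 θ q) by field_simp,
      Real.sqrt_mul (by positivity), Real.sqrt_sq b2.le]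
  have hN := noisy_sum θ q (fun m => (zq θ q : ℂ) ^ (-m) * Complex.exp ((m : ℂ) * t * Complex.I))
  rw [hN]
  have e3 : Real.exp (-Kq θ q) * (1 - mu2 θ q + mu2 θ q * Real.cos t) =
      1 - 2 * beta1 θ q - 2 * beta2 θ q + 4 * √(beta1 θ q * beta2 θ q) * Real.cos t := by
    linear_combination hr + (Real.cos t - 1) * hmu
  rw [e3]
  have e1' : (beta1 θ q : ℂ) * (zq θ q : ℂ) = (√(beta1 θ q * beta2 θ q) : ℂ) := by
    exact_mod_cast e1
  have e2' : (beta2 θ q : ℂ) * (zq θ q : ℂ)⁻¹ = (√(beta1 θ q * beta2 θ q) : ℂ) := by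
    exact_mod_cast e2
  have e4 := Complex.two_cos (t : ℂ)
  simp only [Int.cast_zero, Int.cast_one, Int.cast_neg, neg_zero, neg_neg, zpow_zero, zpow_one,
    zero_mul, Complex.exp_zero, one_mul, mul_one, zpow_neg]
  push_cast
  rw [show (-1 : ℂ) * t * Complex.I = -t * Complex.I by ring]
  linear_combination (2 * Complex.exp (-t * Complex.I)) * e1' +
    (2 * Complex.exp (t * Complex.I)) * e2' - 2 * (√(beta1 θ q * beta2 θ q) : ℂ) * e4

lemma prob_eq (θ q : ℝ) (hθ0 : 0 < θ) (hθ1 : θ < 1 / 2) (hq0 : 0 ≤ q) (hq1 : q < 1 / 2)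
    {n : ℕ} (hn : 0 < n) (k : ℕ) :
    iidProb (noisy q (isingP θ chainA)) n {xs | ∑ i, Wf (xs i) = (k : ℤ)} =
      Real.exp (-(n : ℝ) * Kq θ q) / √(2 * Real.pi * mu2 θ q * n) *
        (zq θ q ^ k * Bn (mu2 θ q) n k) := by
  obtain ⟨z0, z1, m0, m1, hP⟩ := hPlem θ q hθ0 hθ1 hq0 hq1
  have h := fourier_rep _ _ _ _ z0 hP n k
  have hp := Real.pi_pos
  have hn' : (0 : ℝ) < n := by exact_mod_cast hn
  have hM : 0 < √(2 * Real.pi / mu2 θ q) := Real.sqrt_pos.mpr (by positivity)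
  have hM2 : 0 < √(2 * Real.pi * mu2 θ q * n) := Real.sqrt_pos.mpr (by positivity)
  have hMM : √(2 * Real.pi / mu2 θ q) * √(2 * Real.pi * mu2 θ q * n) = 2 * Real.pi * √n := by
    rw [← Real.sqrt_mul (by positivity),
      show 2 * Real.pi / mu2 θ q * (2 * Real.pi * mu2 θ q * n) = (2 * Real.pi) ^ 2 * n by
        field_simp, Real.sqrt_mul (by positivity), Real.sqrt_sq (by positivity)]
  have hA : (∫ t in (-Real.pi)..Real.pi, (1 - mu2 θ q + mu2 θ q * Real.cos t) ^ n *
      Real.cos (((k : ℤ) : ℝ) * t)) = Aint (mu2 θ q) n k := by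
    simp [Aint]
  rw [hA, ← Real.exp_nat_mul, zpow_natCast, ← eq_div_iff (by positivity)] at h
  rw [h, Bn, show (n : ℝ) * -Kq θ q = -(n : ℝ) * Kq θ q by ring]
  have e : √(n : ℝ) = √(2 * Real.pi / mu2 θ q) * √(2 * Real.pi * mu2 θ q * n) / (2 * Real.pi) := by
    rw [hMM]; field_simp
  rw [e]
  generalize √(2 * Real.pi / mu2 θ q) = M at *
  generalize √(2 * Real.pi * mu2 θ q * n) = M' at *
  field_simp

/-- exact asymptotics for the tie and crossover probabilities with noisy
samples: `ℙ(Â^{(q)}_{1,3} = Â^{(q)}_{1,2}) = f̃^{(q)}(n)(1 + o(n⁻¹))` and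
`ℙ(Â^{(q)}_{1,3} ≥ Â^{(q)}_{1,2}) = f^{(q)}(n)(1 + o(n⁻¹))`. -/
theorem stmt18 (θ q : ℝ) (hθ0 : 0 < θ) (hθ1 : θ < 1 / 2) (hq0 : 0 ≤ q) (hq1 : q < 1 / 2) :
    Filter.Tendsto (fun n : ℕ =>
      (n : ℝ) * (iidProb (noisy q (isingP θ chainA)) n
        {ys | Ahat ys 0 2 = Ahat ys 0 1} / ftildeq θ q n - 1))
      Filter.atTop (nhds 0) ∧
    Filter.Tendsto (fun n : ℕ =>
      (n : ℝ) * (iidProb (noisy q (isingP θ chainA)) n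
        {ys | Ahat ys 0 1 ≤ Ahat ys 0 2} / fnq θ q n - 1))
      Filter.atTop (nhds 0) := by
  obtain ⟨z0, z1, m0, m1, -⟩ := hPlem θ q hθ0 hθ1 hq0 hq1
  have hp := Real.pi_pos
  have hprob := fun {n : ℕ} (hn : 0 < n) (k : ℕ) => prob_eq θ q hθ0 hθ1 hq0 hq1 hn k
  unfold fnq ftildeq
  set μ := mu2 θ q
  set z := zq θ q
  have hinv : Tendsto (fun n : ℕ => 1 / (n : ℝ)) atTop (nhds 0) :=
    tendsto_one_div_atTop_nhds_zero_nat
  constructor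
  · have hD : Tendsto (fun n : ℕ => (n : ℝ) * ((1 + (1 - 3 * μ) / (8 * μ * n)) - 1)) atTop
        (nhds ((1 - 3 * μ) / (8 * μ))) := by
      refine tendsto_const_nhds.congr' ?_
      filter_upwards [eventually_gt_atTop 0] with n hn
      have hn' : (0 : ℝ) < n := by exact_mod_cast hn
      field_simp
      ring
    refine (ratio_lim (B1 m0 m1) hD).congr' ?_
    filter_upwards [eventually_gt_atTop 0] with n hn
    have hn' : (0 : ℝ) < n := by exact_mod_cast hn
    rw [set_eq hn, hprob hn 0, pow_zero, one_mul]
    have hM2 : 0 < √(2 * Real.pi * μ * n) := Real.sqrt_pos.mpr (by positivity)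
    rw [mul_div_mul_left]
    exact (div_pos (Real.exp_pos _) hM2).ne'
  · have hz : 0 < 1 - z := by linarith
    have hD : Tendsto (fun n : ℕ => (n : ℝ) * ((1 + (1 - 3 * μ) / (8 * μ * n)) *
        (1 - z * (1 + z) / (2 * (1 - z) ^ 2 * μ * n)) - 1)) atTop
        (nhds ((1 - 3 * μ) / (8 * μ) - z * (1 + z) / (2 * (1 - z) ^ 2 * μ))) := by
      have h := (hinv.const_mul ((1 - 3 * μ) / (8 * μ) *
        (z * (1 + z) / (2 * (1 - z) ^ 2 * μ)))).const_sub
          ((1 - 3 * μ) / (8 * μ) - z * (1 + z) / (2 * (1 - z) ^ 2 * μ))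
      rw [mul_zero, sub_zero] at h
      refine h.congr' ?_
      filter_upwards [eventually_gt_atTop 0] with n hn
      have hn' : (0 : ℝ) < n := by exact_mod_cast hn
      rw [← div_div _ (8 * μ) (n : ℝ), ← div_div _ (2 * (1 - z) ^ 2 * μ) (n : ℝ)]
      generalize (1 - 3 * μ) / (8 * μ) = c
      generalize z * (1 + z) / (2 * (1 - z) ^ 2 * μ) = d
      field_simp
      ring
    refine (ratio_lim (B3 m0 m1 z0.le z1) hD).congr' ?_
    filter_upwards [eventually_gt_atTop 0] with n hn
    have hn' : (0 : ℝ) < n := by exact_mod_cast hn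
    rw [iid_ge hn]
    simp only [hprob hn]
    rw [← Finset.mul_sum]
    have hM2 : 0 < √(2 * Real.pi * μ * n) := Real.sqrt_pos.mpr (by positivity)
    have hE := (div_pos (Real.exp_pos (-(n : ℝ) * Kq θ q)) hM2).ne'
    congr 2
    generalize Real.exp (-(n : ℝ) * Kq θ q) / √(2 * Real.pi * μ * n) = E at *
    generalize 1 - z * (1 + z) / (2 * (1 - z) ^ 2 * μ * n) = d
    generalize 1 + (1 - 3 * μ) / (8 * μ * n) = c
    rw [show E * c / (1 - z) * d = E * (c * d / (1 - z)) by ring, mul_div_mul_left _ _ hE,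
      div_div_eq_mul_div, mul_comm (1 - z)]
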